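/- For every n ≥ 1, the truncated Laguerre polynomials satisfy the structure relation (x² − z·x)·P_{n+1}′(x) = (n+1)·P_{n+2}(x) + (1/2)·(a_{n+2} + a_{n+1} + b_{n+1}² − (z + α + 2)·b_{n+1} + z·(1 + α))·P_{n+1}(x) + (b_{n+1} + b_n − (z + α + 2 + n))·a_{n+1}·P_n(x) + a_{n+1}·a_n·P_{n−1}(x). -/

import Mathlib

open MeasureTheory intervalIntegral Polynomial

/-!
Integrating by parts against the weight `w = x ^ α * exp (-x)` on `[0, z]` gives the Pearson
equation `L (φ p') = L (ψ p)` with `φ = x² - z x` and `ψ = x² - (z + α + 2) x + z (1 + α)`; the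
boundary terms vanish because `φ w` is zero at both ends. For any functional satisfying a Pearson
equation with `φ` and `ψ` at most quadratic, `L (φ Pₘ' Pₖ) = L (ψ Pₖ Pₘ) - L (φ Pₖ' Pₘ)`. Both
terms on the right vanish for `k < m - 2`, and the left side vanishes for `k > m + 1`, so `φ Pₘ'`
is a combination of `Pₘ₋₂, …, Pₘ₊₁`. The coefficients are read off by pairing with each of these
four, the three-term recurrence evaluating the moments `L (ψ Pₖ Pₘ)`; for `k = m` the identity
determines twice the coefficient, whence the factor `1 / 2`.
-/

section Pearson

variable {R : Type*} [CommRing R] {φ ψ : R[X]}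

theorem map_C_mul (L : R[X] →ₗ[R] R) (c : R) (p : R[X]) : L (C c * p) = c * L p := by
  rw [C_mul', map_smul, smul_eq_mul]

theorem map_mul_of_natDegree_le_two (L : R[X] →ₗ[R] R) (hψ : ψ.natDegree ≤ 2) (p : R[X]) :
    L (ψ * p) = ψ.coeff 2 * L (X ^ 2 * p) + ψ.coeff 1 * L (X * p) + ψ.coeff 0 * L p := by
  have expand : ψ * p =
      C (ψ.coeff 2) * (X ^ 2 * p) + C (ψ.coeff 1) * (X * p) + C (ψ.coeff 0) * p := by
    conv_lhs => rw [eq_quadratic_of_degree_le_two (natDegree_le_iff_degree_le.mp hψ)]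
    ring
  simp only [expand, map_add, map_C_mul]

theorem natDegree_mul_derivative_le {p : R[X]} {d n : ℕ} (hφ : φ.natDegree ≤ d + 1)
    (hp : p.natDegree ≤ n) : (φ * derivative p).natDegree ≤ n + d := by
  cases n with
  | zero => simp [derivative_of_natDegree_zero (Nat.le_zero.mp hp)]
  | succ n =>
    have hp' : (derivative p).natDegree ≤ n := (natDegree_derivative_le p).trans (by omega)
    exact (natDegree_mul_le_of_le hφ hp').trans (by omega)

theorem coeff_mul_derivative {p : R[X]} {d n : ℕ} (hφ : φ.natDegree ≤ d + 1)
    (hp : p.natDegree ≤ n) :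
    (φ * derivative p).coeff (n + d) = n * φ.coeff (d + 1) * p.coeff n := by
  cases n with
  | zero => simp [derivative_of_natDegree_zero (Nat.le_zero.mp hp)]
  | succ n =>
    have hp' : (derivative p).natDegree ≤ n := (natDegree_derivative_le p).trans (by omega)
    rw [show n + 1 + d = d + 1 + n by omega, coeff_mul_add_eq_of_natDegree_le hφ hp',
      coeff_derivative]
    push_cast
    ring

/-- The Pearson equation `D (φ L) + ψ L = 0` of a semiclassical functional, tested on polynomials:
the distributional derivative is `⟨D (φ L), p⟩ = -⟨L, φ p'⟩`. -/
def SatisfiesPearson (L : R[X] →ₗ[R] R) (φ ψ : R[X]) : Prop :=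
  ∀ p, L (φ * derivative p) = L (ψ * p)

theorem SatisfiesPearson.map_mul_derivative_mul {L : R[X] →ₗ[R] R} (hL : SatisfiesPearson L φ ψ)
    (p q : R[X]) :
    L (φ * derivative p * q) = L (ψ * q * p) - L (φ * derivative q * p) := by
  have product : φ * derivative (p * q) = φ * derivative p * q + φ * derivative q * p := by
    rw [derivative_mul]
    ring
  have pearson := hL (p * q)
  rw [product, map_add] at pearson
  rw [eq_sub_iff_add_eq, pearson]
  congr 1
  ring

end Pearson

/-- `P` is the monic orthogonal polynomial sequence of the functional `L`. The squared norms
`L (P n * P n)` are allowed to vanish, so `L` need not be quasi-definite. -/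
structure IsMonicOrthogonal {R : Type*} [CommRing R] (L : R[X] →ₗ[R] R) (P : ℕ → R[X]) : Prop where
  monic : ∀ n, (P n).Monic
  natDegree_eq : ∀ n, (P n).natDegree = n
  orthogonal : ∀ m n, m ≠ n → L (P m * P n) = 0

/-- The three-term recurrence `x Pₙ = Pₙ₊₁ + bₙ Pₙ + aₙ Pₙ₋₁` with `P₋₁ = 0`. Since `P (0 - 1)` is
`P 0`, the convention on `P₋₁` is encoded by `a 0 = 0`. -/
structure ThreeTermRecurrence {R : Type*} [CommRing R] (P : ℕ → R[X]) (a b : ℕ → R) : Prop where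
  zero : a 0 = 0
  X_mul : ∀ n, X * P n = P (n + 1) + C (b n) * P n + C (a n) * P (n - 1)

theorem ThreeTermRecurrence.map_X_mul {R : Type*} [CommRing R] {P : ℕ → R[X]} {a b : ℕ → R}
    (hP : ThreeTermRecurrence P a b) (L : R[X] →ₗ[R] R) (n : ℕ) (q : R[X]) :
    L (X * P n * q) = L (P (n + 1) * q) + b n * L (P n * q) + a n * L (P (n - 1) * q) := by
  simp only [hP.X_mul, add_mul, mul_assoc, map_add, map_C_mul]

namespace IsMonicOrthogonal

section Projection

variable {R : Type*} [CommRing R] {L : R[X] →ₗ[R] R} {P : ℕ → R[X]}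

theorem coeff_self (h : IsMonicOrthogonal L P) (n : ℕ) : (P n).coeff n = 1 := by
  simpa only [h.natDegree_eq] using (h.monic n).coeff_natDegree

theorem map_mul_eq_zero_of_degree_lt (h : IsMonicOrthogonal L P) {q : R[X]} {n : ℕ}
    (hq : q.degree < n) : L (q * P n) = 0 := by
  nontriviality R
  let S : Sequence R := ⟨P, fun i ↦ by
    rw [degree_eq_natDegree (h.monic i).ne_zero, h.natDegree_eq]⟩
  have q_mem : q ∈ Submodule.span R (S '' Set.Iio n) := by
    rw [S.span_degreeLT fun i _ ↦ by simp [S, (h.monic i).leadingCoeff]]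
    exact mem_degreeLT.mpr hq
  have span_le : Submodule.span R (S '' Set.Iio n) ≤ (L ∘ₗ LinearMap.mulRight R (P n)).ker := by
    rw [Submodule.span_le]
    rintro _ ⟨i, hi, rfl⟩
    exact h.orthogonal i n (ne_of_lt hi)
  exact span_le q_mem

theorem map_mul_eq_coeff_mul (h : IsMonicOrthogonal L P) {q : R[X]} {n : ℕ}
    (hq : q.natDegree ≤ n) : L (q * P n) = q.coeff n * L (P n * P n) := by
  have remainder_degree : (q - C (q.coeff n) * P n).degree < n := by
    rw [degree_lt_iff_coeff_zero]
    intro i hi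
    rcases hi.eq_or_lt with rfl | hi
    · simp [h.coeff_self]
    · have hPi : (P n).coeff i = 0 := coeff_eq_zero_of_natDegree_lt (by rwa [h.natDegree_eq])
      simp [hPi, coeff_eq_zero_of_natDegree_lt (hq.trans_lt hi)]
  have remainder := h.map_mul_eq_zero_of_degree_lt remainder_degree
  rwa [sub_mul, mul_assoc, map_sub, map_C_mul, sub_eq_zero] at remainder

theorem map_mul_eq_zero_of_natDegree_lt (h : IsMonicOrthogonal L P) {q : R[X]} {n : ℕ}
    (hq : q.natDegree < n) : L (q * P n) = 0 := by
  rw [h.map_mul_eq_coeff_mul hq.le, coeff_eq_zero_of_natDegree_lt hq, zero_mul]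

theorem eq_of_map_mul_eq [NoZeroDivisors R] (h : IsMonicOrthogonal L P)
    (hnorm : ∀ n, L (P n * P n) ≠ 0) {p q : R[X]} (hpq : ∀ n, L (p * P n) = L (q * P n)) :
    p = q := by
  by_contra hne
  have top_coeff := h.map_mul_eq_coeff_mul (le_refl (p - q).natDegree)
  rw [sub_mul, map_sub, hpq, sub_self] at top_coeff
  exact mul_ne_zero (leadingCoeff_ne_zero.mpr (sub_ne_zero.mpr hne)) (hnorm _) top_coeff.symm

end Projection

section Moments

variable {R : Type*} [CommRing R] {L : R[X] →ₗ[R] R} {P : ℕ → R[X]} {a b : ℕ → R}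

theorem mul_map_pred_mul (h : IsMonicOrthogonal L P) (hP : ThreeTermRecurrence P a b) {m n : ℕ}
    (hmn : n ≠ m + 1) : a n * L (P (n - 1) * P m) = 0 := by
  cases n with
  | zero => rw [hP.zero, zero_mul]
  | succ n => rw [Nat.add_sub_cancel, h.orthogonal n m (by omega), mul_zero]

theorem map_X_mul_self (h : IsMonicOrthogonal L P) (hP : ThreeTermRecurrence P a b) (n : ℕ) :
    L (X * P n * P n) = b n * L (P n * P n) := by
  rw [hP.map_X_mul, h.orthogonal _ _ n.succ_ne_self, h.mul_map_pred_mul hP n.lt_succ_self.ne]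
  ring

theorem map_X_mul_succ (h : IsMonicOrthogonal L P) (hP : ThreeTermRecurrence P a b) (n : ℕ) :
    L (X * P n * P (n + 1)) = L (P (n + 1) * P (n + 1)) := by
  rw [hP.map_X_mul, h.orthogonal _ _ n.lt_succ_self.ne, h.mul_map_pred_mul hP (by omega)]
  ring

theorem map_X_mul_add_two (h : IsMonicOrthogonal L P) (hP : ThreeTermRecurrence P a b) (n : ℕ) :
    L (X * P n * P (n + 2)) = 0 := by
  rw [hP.map_X_mul, h.orthogonal (n + 1) _ (by omega), h.orthogonal n _ (by omega),
    h.mul_map_pred_mul hP (by omega)]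
  ring

theorem map_mul_self_succ (h : IsMonicOrthogonal L P) (hP : ThreeTermRecurrence P a b) (n : ℕ) :
    L (P (n + 1) * P (n + 1)) = a (n + 1) * L (P n * P n) := by
  calc L (P (n + 1) * P (n + 1)) = L (X * P n * P (n + 1)) := (h.map_X_mul_succ hP n).symm
    _ = L (X * P (n + 1) * P n) := by congr 1; ring
    _ = a (n + 1) * L (P n * P n) := by
      rw [hP.map_X_mul, h.orthogonal (n + 1 + 1) n (by omega), h.orthogonal (n + 1) n (by omega),
        Nat.add_sub_cancel]
      ring

theorem map_X_sq_mul_self (h : IsMonicOrthogonal L P) (hP : ThreeTermRecurrence P a b) (n : ℕ) :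
    L (X ^ 2 * (P n * P n)) = (a (n + 1) + b n ^ 2 + a n) * L (P n * P n) := by
  have pred_term : a n * L (P (n - 1) * (X * P n)) = a n * L (P n * P n) := by
    cases n with
    | zero => rw [hP.zero, zero_mul, zero_mul]
    | succ n => rw [Nat.add_sub_cancel, mul_left_comm, ← mul_assoc, h.map_X_mul_succ hP]
  rw [show X ^ 2 * (P n * P n) = X * P n * (X * P n) by ring, hP.map_X_mul, pred_term,
    mul_comm (P (n + 1)), mul_comm (P n) (X * P n), h.map_X_mul_succ hP, h.map_X_mul_self hP,
    h.map_mul_self_succ hP]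
  ring

theorem map_X_sq_mul_succ (h : IsMonicOrthogonal L P) (hP : ThreeTermRecurrence P a b) (n : ℕ) :
    L (X ^ 2 * (P n * P (n + 1))) = (b (n + 1) + b n) * L (P (n + 1) * P (n + 1)) := by
  rw [show X ^ 2 * (P n * P (n + 1)) = X * P (n + 1) * (X * P n) by ring, hP.map_X_mul,
    Nat.add_sub_cancel]
  simp only [mul_comm _ (X * P n)]
  rw [h.map_X_mul_add_two hP, h.map_X_mul_succ hP, h.map_X_mul_self hP, h.map_mul_self_succ hP]
  ring

end Moments

section StructureRelation

variable {R : Type*} [CommRing R] {L : R[X] →ₗ[R] R} {P : ℕ → R[X]} {a b : ℕ → R} {φ ψ : R[X]}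

theorem two_mul_map_mul_derivative_mul_self (h : IsMonicOrthogonal L P)
    (hP : ThreeTermRecurrence P a b) (hL : SatisfiesPearson L φ ψ) (hψ : ψ.natDegree ≤ 2) (n : ℕ) :
    2 * L (φ * derivative (P n) * P n) =
      (ψ.coeff 2 * (a (n + 1) + a n + b n ^ 2) + ψ.coeff 1 * b n + ψ.coeff 0) * L (P n * P n) := by
  have parts := hL.map_mul_derivative_mul (P n) (P n)
  rw [mul_assoc ψ, map_mul_of_natDegree_le_two L hψ, h.map_X_sq_mul_self hP, ← mul_assoc X,
    h.map_X_mul_self hP] at parts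
  linear_combination parts

theorem map_mul_derivative_mul_succ (h : IsMonicOrthogonal L P) (hφ : φ.natDegree ≤ 2) (n : ℕ) :
    L (φ * derivative (P n) * P (n + 1)) = n * φ.coeff 2 * L (P (n + 1) * P (n + 1)) := by
  rw [h.map_mul_eq_coeff_mul (natDegree_mul_derivative_le hφ (h.natDegree_eq n).le),
    coeff_mul_derivative hφ (h.natDegree_eq n).le, h.coeff_self, mul_one]

theorem map_mul_derivative_mul_eq_zero (h : IsMonicOrthogonal L P) (hφ : φ.natDegree ≤ 2) {k n : ℕ}
    (hnk : n + 2 ≤ k) : L (φ * derivative (P n) * P k) = 0 :=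
  h.map_mul_eq_zero_of_natDegree_lt
    ((natDegree_mul_derivative_le hφ (h.natDegree_eq n).le).trans_lt (by omega))

theorem map_mul_derivative_succ_mul (h : IsMonicOrthogonal L P) (hP : ThreeTermRecurrence P a b)
    (hL : SatisfiesPearson L φ ψ) (hφ : φ.natDegree ≤ 2) (hψ : ψ.natDegree ≤ 2) (n : ℕ) :
    L (φ * derivative (P (n + 1)) * P n) =
      (ψ.coeff 2 * (b (n + 1) + b n) + ψ.coeff 1 - n * φ.coeff 2) * L (P (n + 1) * P (n + 1)) := by
  rw [hL.map_mul_derivative_mul, h.map_mul_derivative_mul_succ hφ, mul_assoc ψ,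
    map_mul_of_natDegree_le_two L hψ, h.map_X_sq_mul_succ hP, ← mul_assoc X, h.map_X_mul_succ hP,
    h.orthogonal n _ n.lt_succ_self.ne]
  ring

theorem map_mul_derivative_add_two_mul (h : IsMonicOrthogonal L P) (hL : SatisfiesPearson L φ ψ)
    (hφ : φ.natDegree ≤ 2) (hψ : ψ.natDegree ≤ 2) (n : ℕ) :
    L (φ * derivative (P (n + 2)) * P n) = ψ.coeff 2 * L (P (n + 2) * P (n + 2)) := by
  have hψP : (ψ * P n).natDegree ≤ 2 + n := natDegree_mul_le_of_le hψ (h.natDegree_eq n).le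
  have leading : (ψ * P n).coeff (2 + n) = ψ.coeff 2 := by
    rw [coeff_mul_add_eq_of_natDegree_le hψ (h.natDegree_eq n).le, h.coeff_self, mul_one]
  rw [hL.map_mul_derivative_mul, h.map_mul_derivative_mul_eq_zero hφ le_rfl, sub_zero,
    add_comm n 2, h.map_mul_eq_coeff_mul hψP, leading]

theorem map_mul_derivative_mul_eq_zero_of_add_three_le (h : IsMonicOrthogonal L P)
    (hL : SatisfiesPearson L φ ψ) (hφ : φ.natDegree ≤ 2) (hψ : ψ.natDegree ≤ 2) {k n : ℕ}
    (hkn : k + 3 ≤ n) : L (φ * derivative (P n) * P k) = 0 := by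
  have hψP : (ψ * P k).natDegree < n :=
    (natDegree_mul_le_of_le hψ (h.natDegree_eq k).le).trans_lt (by omega)
  rw [hL.map_mul_derivative_mul, h.map_mul_derivative_mul_eq_zero hφ (by omega), sub_zero,
    h.map_mul_eq_zero_of_natDegree_lt hψP]

end StructureRelation

theorem structure_relation {K : Type*} [Field K] [NeZero (2 : K)] {L : K[X] →ₗ[K] K}
    {P : ℕ → K[X]} {a b : ℕ → K} {φ ψ : K[X]} (h : IsMonicOrthogonal L P)
    (hnorm : ∀ n, L (P n * P n) ≠ 0) (hP : ThreeTermRecurrence P a b)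
    (hL : SatisfiesPearson L φ ψ) (hφ : φ.natDegree ≤ 2) (hψ : ψ.natDegree ≤ 2) (n : ℕ) :
    φ * derivative (P (n + 1)) =
      C ((n + 1) * φ.coeff 2) * P (n + 2)
        + C ((1 / 2) * (ψ.coeff 2 * (a (n + 2) + a (n + 1) + b (n + 1) ^ 2)
            + ψ.coeff 1 * b (n + 1) + ψ.coeff 0)) * P (n + 1)
        + C ((ψ.coeff 2 * (b (n + 1) + b n) + ψ.coeff 1 - n * φ.coeff 2) * a (n + 1)) * P n
        + C (ψ.coeff 2 * a (n + 1) * a n) * P (n - 1) := by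
  refine h.eq_of_map_mul_eq hnorm fun k ↦ ?_
  simp only [add_mul, mul_assoc (C _), map_add, map_C_mul]
  rw [mul_assoc _ (a n)]
  obtain hk | rfl | rfl | rfl | rfl | hk :
      k + 1 < n ∨ n = k + 1 ∨ k = n ∨ k = n + 1 ∨ k = n + 2 ∨ n + 3 ≤ k := by omega
  · rw [h.map_mul_derivative_mul_eq_zero_of_add_three_le hL hφ hψ (by omega),
      h.orthogonal (n + 2) k (by omega), h.orthogonal (n + 1) k (by omega),
      h.orthogonal n k (by omega), h.mul_map_pred_mul hP (by omega)]
    ring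
  · rw [h.map_mul_derivative_add_two_mul hL hφ hψ, h.orthogonal (k + 1 + 2) k (by omega),
      h.orthogonal (k + 1 + 1) k (by omega), h.orthogonal (k + 1) k (by omega),
      Nat.add_sub_cancel, ← h.map_mul_self_succ hP k, h.map_mul_self_succ hP (k + 1)]
    ring
  · rw [h.map_mul_derivative_succ_mul hP hL hφ hψ, h.orthogonal (k + 2) k (by omega),
      h.orthogonal (k + 1) k (by omega), h.mul_map_pred_mul hP (by omega), h.map_mul_self_succ hP]
    ring
  · have diagonal := h.two_mul_map_mul_derivative_mul_self hP hL hψ (n + 1)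
    rw [h.orthogonal (n + 2) (n + 1) (by omega), h.orthogonal n (n + 1) (by omega),
      h.mul_map_pred_mul hP (by omega)]
    field_simp
    linear_combination diagonal
  · rw [h.map_mul_derivative_mul_succ hφ, h.orthogonal (n + 1) (n + 2) (by omega),
      h.orthogonal n (n + 2) (by omega), h.mul_map_pred_mul hP (by omega)]
    push_cast
    ring
  · rw [h.map_mul_derivative_mul_eq_zero hφ (by omega), h.orthogonal (n + 2) k (by omega),
      h.orthogonal (n + 1) k (by omega), h.orthogonal n k (by omega),
      h.mul_map_pred_mul hP (by omega)]
    ring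

end IsMonicOrthogonal

section WeightFunctional

variable {w : ℝ → ℝ} {s t : ℝ}

theorem intervalIntegrable_eval_mul (hw : IntervalIntegrable w volume s t) (p : ℝ[X]) :
    IntervalIntegrable (fun x ↦ p.eval x * w x) volume s t :=
  hw.continuousOn_mul p.continuous.continuousOn

/-- The moment functional `p ↦ ∫ₛᵗ p w` of an integrable weight `w`. -/
noncomputable def weightFunctional (hw : IntervalIntegrable w volume s t) : ℝ[X] →ₗ[ℝ] ℝ where
  toFun p := ∫ x in s..t, p.eval x * w x
  map_add' p q := by
    simp only [eval_add, add_mul]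
    exact integral_add (intervalIntegrable_eval_mul hw p) (intervalIntegrable_eval_mul hw q)
  map_smul' c p := by
    simp only [eval_smul, smul_eq_mul, mul_assoc, intervalIntegral.integral_const_mul,
      RingHom.id_apply]

theorem weightFunctional_apply (hw : IntervalIntegrable w volume s t) (p : ℝ[X]) :
    weightFunctional hw p = ∫ x in s..t, p.eval x * w x :=
  rfl

theorem weightFunctional_mul_self_pos (hw : IntervalIntegrable w volume s t) (hst : s < t)
    (hpos : ∀ x ∈ Set.Ioo s t, 0 < w x) {p : ℝ[X]} (hp : p ≠ 0) :
    0 < weightFunctional hw (p * p) := by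
  have nonneg : 0 ≤ᵐ[volume.restrict (Set.uIoc s t)] fun x ↦ (p * p).eval x * w x := by
    rw [Set.uIoc_of_le hst.le, ← restrict_Ioo_eq_restrict_Ioc]
    filter_upwards [ae_restrict_mem measurableSet_Ioo] with x hx
    rw [eval_mul]
    exact mul_nonneg (mul_self_nonneg _) (hpos x hx).le
  have support_superset : Set.Ioo s t \ p.rootSet ℝ ⊆
      Function.support (fun x ↦ (p * p).eval x * w x) ∩ Set.Ioc s t := by
    rintro x ⟨hx, hroot⟩
    have heval : p.eval x ≠ 0 := fun h0 ↦ hroot ((mem_rootSet_of_ne hp).mpr (by simpa using h0))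
    refine ⟨?_, Set.Ioo_subset_Ioc_self hx⟩
    rw [Function.mem_support, eval_mul]
    exact mul_ne_zero (mul_ne_zero heval heval) (hpos x hx).ne'
  rw [weightFunctional_apply, integral_pos_iff_support_of_nonneg_ae' nonneg
    (intervalIntegrable_eval_mul hw _)]
  refine ⟨hst, lt_of_lt_of_le ?_ (measure_mono support_superset)⟩
  rw [measure_sdiff_null ((p.rootSet_finite ℝ).measure_zero _)]
  simpa using hst

theorem weightFunctional_satisfiesPearson (hw : IntervalIntegrable w volume s t) (hst : s ≤ t)
    {φ ψ : ℝ[X]} (hcont : ContinuousOn (fun x ↦ φ.eval x * w x) (Set.Icc s t))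
    (hs : φ.eval s * w s = 0) (ht : φ.eval t * w t = 0)
    (hderiv : ∀ x ∈ Set.Ioo s t, HasDerivAt (fun x ↦ φ.eval x * w x) (-(ψ.eval x * w x)) x) :
    SatisfiesPearson (weightFunctional hw) φ ψ := by
  intro p
  have hasDerivAt_product : ∀ x ∈ Set.Ioo s t, HasDerivAt (fun x ↦ φ.eval x * w x * p.eval x)
      ((φ * derivative p - ψ * p).eval x * w x) x := fun x hx ↦
    ((hderiv x hx).mul (p.hasDerivAt x)).congr_deriv (by simp only [eval_sub, eval_mul]; ring)
  rw [← sub_eq_zero, ← map_sub, weightFunctional_apply,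
    integral_eq_sub_of_hasDerivAt_of_le hst (hcont.mul p.continuous.continuousOn)
      hasDerivAt_product (intervalIntegrable_eval_mul hw _)]
  simp only [Pi.mul_apply, hs, ht, zero_mul, sub_self]

end WeightFunctional

section TruncatedLaguerre

variable {α : ℝ}

theorem intervalIntegrable_rpow_mul_exp_neg (hα : -1 < α) (s t : ℝ) :
    IntervalIntegrable (fun x ↦ x ^ α * Real.exp (-x)) volume s t :=
  (intervalIntegrable_rpow' hα).mul_continuousOn (by fun_prop)

/-- The truncated Laguerre functional `p ↦ ∫₀ᶻ p(x) x ^ α e⁻ˣ dx`. -/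
noncomputable def truncatedLaguerre (hα : -1 < α) (z : ℝ) : ℝ[X] →ₗ[ℝ] ℝ :=
  weightFunctional (intervalIntegrable_rpow_mul_exp_neg hα 0 z)

theorem truncatedLaguerre_mul_self_pos (hα : -1 < α) {z : ℝ} (hz : 0 < z) {p : ℝ[X]}
    (hp : p ≠ 0) : 0 < truncatedLaguerre hα z (p * p) :=
  weightFunctional_mul_self_pos _ hz
    (fun _ hx ↦ mul_pos (Real.rpow_pos_of_pos hx.1 α) (Real.exp_pos _)) hp

theorem truncatedLaguerre_satisfiesPearson (hα : -1 < α) {z : ℝ} (hz : 0 ≤ z) :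
    SatisfiesPearson (truncatedLaguerre hα z) (X ^ 2 - C z * X)
      (X ^ 2 - C (z + α + 2) * X + C (z * (1 + α))) := by
  have hα' : 0 < α + 1 := by linarith
  have mul_weight : ∀ x, 0 ≤ x → (X ^ 2 - C z * X).eval x * (x ^ α * Real.exp (-x)) =
      x ^ (α + 1) * ((x - z) * Real.exp (-x)) := by
    intro x hx
    rw [Real.rpow_add_one' hx hα'.ne']
    simp only [eval_sub, eval_mul, eval_pow, eval_X, eval_C]
    ring
  refine weightFunctional_satisfiesPearson _ hz ?_ (by simp) (by simp [sq]) ?_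
  · have hcont : Continuous fun x : ℝ ↦ x ^ (α + 1) * ((x - z) * Real.exp (-x)) :=
      (Real.continuous_rpow_const hα'.le).mul (by fun_prop)
    exact hcont.continuousOn.congr fun x hx ↦ mul_weight x hx.1
  · intro x hx
    have hderiv := (Real.hasDerivAt_rpow_const (p := α + 1) (Or.inl hx.1.ne')).mul
      (((hasDerivAt_id x).sub_const z).mul (hasDerivAt_neg x).exp)
    have eventuallyEq := (eventually_gt_nhds hx.1).mono fun y hy ↦ mul_weight y hy.le
    refine (hderiv.congr_of_eventuallyEq eventuallyEq).congr_deriv ?_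
    simp only [add_sub_cancel_right, id_eq, Pi.mul_apply, Real.rpow_add_one hx.1.ne', eval_add,
      eval_sub, eval_mul, eval_pow, eval_X, eval_C]
    ring

end TruncatedLaguerre

/-- Structure relation for the truncated Laguerre polynomials. -/
theorem truncated_laguerre_structure (α z : ℝ) (hα : -1 < α) (hz : 0 < z)
    (P : ℕ → Polynomial ℝ)
    (hP_monic : ∀ n, (P n).Monic)
    (hP_deg : ∀ n, (P n).natDegree = n)
    (hP_orth : ∀ m n, m ≠ n →
      ∫ x in (0:ℝ)..z, (P m).eval x * (P n).eval x * x ^ α * Real.exp (-x) = 0)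
    (a b : ℕ → ℝ)
    (ha0 : a 0 = 0)
    (hrec0 : Polynomial.X * P 0 = P 1 + Polynomial.C (b 0) * P 0)
    (hrec : ∀ n, 1 ≤ n →
      Polynomial.X * P n = P (n + 1) + Polynomial.C (b n) * P n + Polynomial.C (a n) * P (n - 1)) :
    ∀ n : ℕ, 1 ≤ n →
      (Polynomial.X ^ 2 - Polynomial.C z * Polynomial.X) *
          Polynomial.derivative (P (n + 1)) =
        Polynomial.C ((n : ℝ) + 1) * P (n + 2)
          + Polynomial.C ((1 / 2) * (a (n + 2) + a (n + 1) + (b (n + 1)) ^ 2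
              - (z + α + 2) * b (n + 1) + z * (1 + α))) * P (n + 1)
          + Polynomial.C ((b (n + 1) + b n - (z + α + 2 + (n : ℝ))) * a (n + 1)) * P n
          + Polynomial.C (a (n + 1) * a n) * P (n - 1) := by
  have h : IsMonicOrthogonal (truncatedLaguerre hα z) P :=
    ⟨hP_monic, hP_deg, fun m n hmn ↦ by
      simpa only [truncatedLaguerre, weightFunctional_apply, eval_mul, mul_assoc]
        using hP_orth m n hmn⟩
  have hP : ThreeTermRecurrence P a b := ⟨ha0, fun n ↦ by
    rcases n with _ | n
    · simpa only [ha0, C_0, zero_mul, add_zero] using hrec0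
    · exact hrec (n + 1) n.succ_pos⟩
  have norm_ne_zero (n : ℕ) : truncatedLaguerre hα z (P n * P n) ≠ 0 :=
    (truncatedLaguerre_mul_self_pos hα hz (hP_monic n).ne_zero).ne'
  have φ_coeff_two : (X ^ 2 - C z * X).coeff 2 = 1 := by simp
  have ψ_coeff_two : (X ^ 2 - C (z + α + 2) * X + C (z * (1 + α))).coeff 2 = 1 := by
    simp [-map_add, -map_mul]
  have ψ_coeff_one : (X ^ 2 - C (z + α + 2) * X + C (z * (1 + α))).coeff 1 = -(z + α + 2) := by
    simp [coeff_C, -map_add, -map_mul]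
  have ψ_coeff_zero : (X ^ 2 - C (z + α + 2) * X + C (z * (1 + α))).coeff 0 = z * (1 + α) := by
    simp
  intro n _
  rw [h.structure_relation norm_ne_zero hP (truncatedLaguerre_satisfiesPearson hα hz.le)
    (by compute_degree) (by compute_degree), φ_coeff_two, ψ_coeff_two, ψ_coeff_one, ψ_coeff_zero]
  ring_nf
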